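/- Let L be a lattice with a least element ⊥ and let a ∈ L be an atom of L that is also a neutral element of L. Then an element x ∈ L is a neutral element of L if and only if x ⊔ a is a neutral element of L. -/

import Mathlib

/-- An element `x` of a lattice `L` is neutral if for all `y, z ∈ L` one has
`(x ⊔ y) ⊓ (y ⊔ z) ⊓ (z ⊔ x) = (x ⊓ y) ⊔ (y ⊓ z) ⊔ (z ⊓ x)`. -/
def IsNeutralElement {L : Type*} [Lattice L] (x : L) : Prop :=
  ∀ y z : L, (x ⊔ y) ⊓ (y ⊔ z) ⊓ (z ⊔ x) = (x ⊓ y) ⊔ (y ⊓ z) ⊔ (z ⊓ x)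

/-!
A neutral element `a` distributes over the lattice operations, and an element `y` is determined by
the pair `(y ⊔ a, y ⊓ a)`. Since `· ⊔ a` and `· ⊓ a` preserve `⊔` and `⊓`, the identity defining
neutrality of `w` may be checked after applying each of these maps, where it depends only on
`w ⊔ a` and on `w ⊓ a` respectively. Hence `x` is neutral iff both `x ⊔ a` and `x ⊓ a` are; when
`a` is an atom, `x ⊓ a` is `⊥` or `a`, and both are neutral.
-/

theorem isNeutralElement_bot {L : Type*} [Lattice L] [OrderBot L] :
    IsNeutralElement (⊥ : L) := by
  intro y z
  simp

namespace IsNeutralElement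

variable {L : Type*} [Lattice L] {a x : L}

theorem toDual (ha : IsNeutralElement a) : IsNeutralElement (OrderDual.toDual a) :=
  fun y z => (ha y z).symm

theorem sup_inf_assoc_of_le (ha : IsNeutralElement a) {y : L} (hy : y ≤ a) (z : L) :
    (y ⊔ z) ⊓ a = y ⊔ z ⊓ a := by
  have hmedian := ha y z
  rwa [sup_eq_left.2 hy, inf_eq_right.2 hy, sup_inf_self, inf_right_comm,
    inf_eq_left.2 (le_sup_right : a ≤ z ⊔ a), inf_comm] at hmedian

theorem inf_sup_right (ha : IsNeutralElement a) (y z : L) :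
    (y ⊔ z) ⊓ a = y ⊓ a ⊔ z ⊓ a :=
  calc
    (y ⊔ z) ⊓ a = (a ⊔ y) ⊓ (y ⊔ z) ⊓ (z ⊔ a) ⊓ a := by
      rw [inf_assoc _ (z ⊔ a), inf_eq_right.2 (le_sup_right : a ≤ z ⊔ a), inf_assoc,
        inf_eq_right.2 (inf_le_right.trans le_sup_left)]
    _ = (y ⊓ a ⊔ z ⊓ a ⊔ y ⊓ z) ⊓ a := by
      rw [ha y z, sup_right_comm, inf_comm a y]
    _ = y ⊓ a ⊔ z ⊓ a ⊔ y ⊓ z ⊓ a :=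
      ha.sup_inf_assoc_of_le (sup_le inf_le_right inf_le_right) _
    _ = y ⊓ a ⊔ z ⊓ a :=
      sup_eq_left.2 (le_sup_of_le_left (inf_le_inf_right a inf_le_left))

theorem sup_inf_right (ha : IsNeutralElement a) (y z : L) :
    y ⊓ z ⊔ a = (y ⊔ a) ⊓ (z ⊔ a) :=
  ha.toDual.inf_sup_right y z

theorem eq_of_sup_eq_of_inf_eq (ha : IsNeutralElement a) {y z : L}
    (hsup : y ⊔ a = z ⊔ a) (hinf : y ⊓ a = z ⊓ a) : y = z := by
  have hle : y ⊔ z ≤ z ⊔ a := sup_le (hsup ▸ le_sup_left) le_sup_left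
  have hge : z ⊓ a ≤ y ⊓ z := le_inf (hinf ▸ inf_le_left) inf_le_left
  have hmedian := ha y z
  rw [sup_comm a y, inf_comm a y, hsup, hinf, inf_right_comm, inf_idem, sup_right_comm, sup_idem,
    inf_eq_right.2 hle, sup_eq_right.2 hge] at hmedian
  exact sup_le_inf.1 hmedian.le

theorem of_sup_eq_of_inf_eq (ha : IsNeutralElement a) {u v w : L} (hu : IsNeutralElement u)
    (hv : IsNeutralElement v) (hsup : w ⊔ a = u ⊔ a) (hinf : w ⊓ a = v ⊓ a) :
    IsNeutralElement w := by
  intro y z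
  apply ha.eq_of_sup_eq_of_inf_eq
  · have hmedian := congrArg (· ⊔ a) (hu y z)
    simpa only [ha.sup_inf_right, sup_sup_distrib_right _ _ a, hsup] using hmedian
  · have hmedian := congrArg (· ⊓ a) (hv y z)
    simpa only [ha.inf_sup_right, inf_inf_distrib_right _ _ a, hinf] using hmedian

theorem sup (hx : IsNeutralElement x) (ha : IsNeutralElement a) : IsNeutralElement (x ⊔ a) :=
  ha.of_sup_eq_of_inf_eq hx ha (by simp) (by simp)

theorem inf (hx : IsNeutralElement x) (ha : IsNeutralElement a) : IsNeutralElement (x ⊓ a) :=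
  (hx.toDual.sup ha.toDual).toDual

theorem inf_of_isAtom [OrderBot L] (ha : IsNeutralElement a) (hatom : IsAtom a) (x : L) :
    IsNeutralElement (x ⊓ a) := by
  obtain hbot | heq := hatom.le_iff.1 (inf_le_right : x ⊓ a ≤ a)
  · rw [hbot]
    exact isNeutralElement_bot
  · rwa [heq]

end IsNeutralElement

theorem isNeutralElement_sup_atom_iff_general {L : Type*} [Lattice L] {a : L}
    (ha : IsNeutralElement a) (x : L) :
    IsNeutralElement x ↔ IsNeutralElement (x ⊔ a) ∧ IsNeutralElement (x ⊓ a) :=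
  ⟨fun hx => ⟨hx.sup ha, hx.inf ha⟩,
    fun ⟨hsup, hinf⟩ => ha.of_sup_eq_of_inf_eq hsup hinf (by simp) (by simp)⟩

/-- If `a` is an atom and a neutral element of a lattice `L` with least element, then
an element `x ∈ L` is a neutral element of `L` if and only if `x ⊔ a` is. -/
theorem isNeutralElement_sup_atom_iff {L : Type*} [Lattice L] [OrderBot L] (a : L)
    (ha : IsAtom a) (hn : IsNeutralElement a) (x : L) :
    IsNeutralElement x ↔ IsNeutralElement (x ⊔ a) := by
  rw [isNeutralElement_sup_atom_iff_general hn x, and_iff_left (hn.inf_of_isAtom ha x)]
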